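/- Let (R₊, R₋) be a cutting of R. Then λ²/(2p) ≤ ΔJ; more precisely, λ²/(2p) = (4 p₊ p₋ / p²) · ΔJ, and 4 p₊ p₋ / p² ≤ 1. -/

import Mathlib

/-! The within-part sums of squares are the squared deviations about the parts' own means, so by
the parallel-axis identity `2 ΔJ = p₊ ‖c₊ - m‖² + p₋ ‖c₋ - m‖²`. The mean `m` divides the segment
from `c₊` to `c₋` in the ratio `p₋ : p₊`, so both indicators are functions of `c₋ - c₊`:
`ΔJ = p₊ p₋ / (2 p) ‖c₋ - c₊‖²` and `λ = (2 p₊ p₋ / p) (c₋ - c₊)`. -/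

section Cutting

open Finset

variable {ι E : Type*}

section Mean

variable [AddCommGroup E] [Module ℝ E]

/-- The mean of `d` over a finite set of pixels, with the junk value `0` on the empty set. -/
noncomputable def mean (S : Finset ι) (d : ι → E) : E :=
  (#S : ℝ)⁻¹ • ∑ i ∈ S, d i

theorem card_smul_mean (S : Finset ι) (d : ι → E) : (#S : ℝ) • mean S d = ∑ i ∈ S, d i := by
  rcases S.eq_empty_or_nonempty with rfl | hS
  · simp
  · exact smul_inv_smul₀ (Nat.cast_ne_zero.mpr hS.card_ne_zero) _

theorem sum_sub_const_eq_card_smul (S : Finset ι) (d : ι → E) (c : E) :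
    ∑ i ∈ S, (d i - c) = (#S : ℝ) • (mean S d - c) := by
  rw [sum_sub_distrib, sum_const, smul_sub, card_smul_mean, Nat.cast_smul_eq_nsmul]

variable [DecidableEq ι] {A B : Finset ι}

theorem mean_sub_mean_union_left (hAB : Disjoint A B) (hne : (A ∪ B).Nonempty) (d : ι → E) :
    mean A d - mean (A ∪ B) d = (#B / #(A ∪ B) : ℝ) • (mean A d - mean B d) := by
  have hp : (#(A ∪ B) : ℝ) ≠ 0 := Nat.cast_ne_zero.mpr hne.card_ne_zero
  have hcard : (#(A ∪ B) : ℝ) = #A + #B := mod_cast card_union_of_disjoint hAB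
  have hmean : (#(A ∪ B) : ℝ) • mean (A ∪ B) d = (#A : ℝ) • mean A d + (#B : ℝ) • mean B d := by
    simp only [card_smul_mean, sum_union hAB]
  rw [div_eq_inv_mul, mul_smul, eq_inv_smul_iff₀ hp, smul_sub, hmean, hcard]
  module

theorem mean_sub_mean_union_right (hAB : Disjoint A B) (hne : (A ∪ B).Nonempty) (d : ι → E) :
    mean B d - mean (A ∪ B) d = (#A / #(A ∪ B) : ℝ) • (mean B d - mean A d) := by
  rw [union_comm] at hne ⊢
  exact mean_sub_mean_union_left hAB.symm hne d

/-- The first-order refinement indicator `λ` of the cutting `(A, B)` of `A ∪ B`. -/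
noncomputable def firstOrderIndicator (A B : Finset ι) (d : ι → E) : E :=
  ∑ i ∈ A, (mean (A ∪ B) d - d i) - ∑ i ∈ B, (mean (A ∪ B) d - d i)

theorem firstOrderIndicator_eq_smul_mean_sub_mean (hAB : Disjoint A B) (hne : (A ∪ B).Nonempty)
    (d : ι → E) :
    firstOrderIndicator A B d = (2 * #A * #B / #(A ∪ B) : ℝ) • (mean B d - mean A d) := by
  calc firstOrderIndicator A B d
      = ∑ i ∈ B, (d i - mean (A ∪ B) d) - ∑ i ∈ A, (d i - mean (A ∪ B) d) := by
        simp only [firstOrderIndicator, sum_sub_distrib]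
        abel
    _ = (2 * #A * #B / #(A ∪ B) : ℝ) • (mean B d - mean A d) := by
        rw [sum_sub_const_eq_card_smul, sum_sub_const_eq_card_smul,
          mean_sub_mean_union_left hAB hne, mean_sub_mean_union_right hAB hne]
        module

end Mean

variable [NormedAddCommGroup E] [InnerProductSpace ℝ E]

/-- The sum of the squared deviations of `d` from its mean over `S`; half of it is the misfit of
the best approximation of `d` by a constant on `S`. -/
noncomputable def sumSqDev (S : Finset ι) (d : ι → E) : ℝ :=
  ∑ i ∈ S, ‖d i - mean S d‖ ^ 2

theorem sum_norm_sub_sq_eq_sumSqDev_add (S : Finset ι) (d : ι → E) (c : E) :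
    ∑ i ∈ S, ‖d i - c‖ ^ 2 = sumSqDev S d + #S * ‖mean S d - c‖ ^ 2 := by
  have cross_term : ∑ i ∈ S, inner ℝ (d i - mean S d) (mean S d - c) = 0 := by
    rw [← sum_inner, sum_sub_const_eq_card_smul, sub_self, smul_zero, inner_zero_left]
  calc ∑ i ∈ S, ‖d i - c‖ ^ 2
      = ∑ i ∈ S, (‖d i - mean S d‖ ^ 2 + 2 * inner ℝ (d i - mean S d) (mean S d - c)
          + ‖mean S d - c‖ ^ 2) := by
        simp only [← norm_add_sq_real, sub_add_sub_cancel]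
    _ = sumSqDev S d + #S * ‖mean S d - c‖ ^ 2 := by
        rw [sum_add_distrib, sum_add_distrib, ← mul_sum, cross_term, sum_const, nsmul_eq_mul,
          mul_zero, add_zero, sumSqDev]

variable [DecidableEq ι] {A B : Finset ι}

/-- The exact refinement indicator `ΔJ` of the cutting `(A, B)` of `A ∪ B`: the decrease of the
least-squares misfit when constants on `A ∪ B` are refined to constants on `A` and on `B`. -/
noncomputable def refinementIndicator (A B : Finset ι) (d : ι → E) : ℝ :=
  1 / 2 * sumSqDev (A ∪ B) d - 1 / 2 * (sumSqDev A d + sumSqDev B d)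

theorem sumSqDev_union (hAB : Disjoint A B) (d : ι → E) :
    sumSqDev (A ∪ B) d = sumSqDev A d + sumSqDev B d
      + (#A * ‖mean A d - mean (A ∪ B) d‖ ^ 2 + #B * ‖mean B d - mean (A ∪ B) d‖ ^ 2) := by
  rw [sumSqDev, sum_union hAB, sum_norm_sub_sq_eq_sumSqDev_add, sum_norm_sub_sq_eq_sumSqDev_add]
  ring

theorem refinementIndicator_eq_mul_norm_mean_sub_mean_sq (hAB : Disjoint A B)
    (hne : (A ∪ B).Nonempty) (d : ι → E) :
    refinementIndicator A B d = #A * #B / (2 * #(A ∪ B)) * ‖mean B d - mean A d‖ ^ 2 := by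
  have hp : (#(A ∪ B) : ℝ) ≠ 0 := Nat.cast_ne_zero.mpr hne.card_ne_zero
  have hcard : (#(A ∪ B) : ℝ) = #A + #B := mod_cast card_union_of_disjoint hAB
  rw [refinementIndicator, sumSqDev_union hAB, mean_sub_mean_union_left hAB hne,
    mean_sub_mean_union_right hAB hne, norm_smul, norm_smul, norm_sub_rev (mean A d),
    mul_pow, mul_pow, Real.norm_eq_abs, Real.norm_eq_abs, sq_abs, sq_abs]
  rw [hcard] at hp ⊢
  field_simp
  ring

theorem norm_firstOrderIndicator_sq_div (hAB : Disjoint A B) (hne : (A ∪ B).Nonempty)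
    (d : ι → E) :
    ‖firstOrderIndicator A B d‖ ^ 2 / (2 * #(A ∪ B))
      = 4 * #A * #B / (#(A ∪ B) : ℝ) ^ 2 * refinementIndicator A B d := by
  rw [firstOrderIndicator_eq_smul_mean_sub_mean hAB hne,
    refinementIndicator_eq_mul_norm_mean_sub_mean_sq hAB hne, norm_smul, mul_pow,
    Real.norm_eq_abs, sq_abs]
  field_simp
  ring

theorem four_mul_card_mul_card_div_card_union_sq_le_one (hAB : Disjoint A B) :
    4 * #A * #B / (#(A ∪ B) : ℝ) ^ 2 ≤ 1 := by
  rw [card_union_of_disjoint hAB, Nat.cast_add]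
  exact div_le_one_of_le₀ (four_mul_le_sq_add _ _) (sq_nonneg _)

theorem first_order_lower_bound_general (hAB : Disjoint A B) (hne : (A ∪ B).Nonempty)
    (d : ι → E) :
    ‖firstOrderIndicator A B d‖ ^ 2 / (2 * #(A ∪ B)) ≤ refinementIndicator A B d ∧
    ‖firstOrderIndicator A B d‖ ^ 2 / (2 * #(A ∪ B))
      = 4 * #A * #B / (#(A ∪ B) : ℝ) ^ 2 * refinementIndicator A B d ∧
    4 * #A * #B / (#(A ∪ B) : ℝ) ^ 2 ≤ 1 := by
  have heq := norm_firstOrderIndicator_sq_div hAB hne d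
  have hle := four_mul_card_mul_card_div_card_union_sq_le_one hAB
  have hnonneg : 0 ≤ refinementIndicator A B d := by
    rw [refinementIndicator_eq_mul_norm_mean_sub_mean_sq hAB hne]
    positivity
  exact ⟨heq.trans_le (mul_le_of_le_one_left hnonneg hle), heq, hle⟩

end Cutting

/-- For a cutting (R₊, R₋) of R: λ²/(2p) ≤ ΔJ; more precisely
λ²/(2p) = (4 p₊ p₋ / p²) · ΔJ, and 4 p₊ p₋ / p² ≤ 1. -/
theorem first_order_lower_bound {ι : Type*} [DecidableEq ι]
    (R Rp Rm : Finset ι) (d : ι → ℝ)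
    (hRp : Rp.Nonempty) (hRm : Rm.Nonempty)
    (hdisj : Disjoint Rp Rm) (hun : Rp ∪ Rm = R)
    (m cp cm ΔJ lam : ℝ)
    (hm : m = (∑ i ∈ R, d i) / R.card)
    (hcp : cp = (∑ i ∈ Rp, d i) / Rp.card)
    (hcm : cm = (∑ i ∈ Rm, d i) / Rm.card)
    (hJ : ΔJ = (1/2) * ∑ i ∈ R, (d i - m)^2
          - (1/2) * ((∑ i ∈ Rp, (d i - cp)^2) + ∑ i ∈ Rm, (d i - cm)^2))
    (hlam : lam = (∑ i ∈ Rp, (m - d i)) - ∑ i ∈ Rm, (m - d i)) :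
    lam^2 / (2 * (R.card : ℝ)) ≤ ΔJ ∧
    lam^2 / (2 * (R.card : ℝ))
      = 4 * (Rp.card : ℝ) * (Rm.card : ℝ) / ((R.card : ℝ))^2 * ΔJ ∧
    4 * (Rp.card : ℝ) * (Rm.card : ℝ) / ((R.card : ℝ))^2 ≤ 1 := by
  subst hun hm hcp hcm hJ hlam
  simpa [firstOrderIndicator, refinementIndicator, sumSqDev, mean, div_eq_inv_mul] using
    first_order_lower_bound_general hdisj (hRp.mono Finset.subset_union_left) d
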